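/- Let N ≥ 2, s ∈ (0,1), and let Ω ⊂ ℝ^N be a bounded Lipschitz domain. For every n ≥ 1, the quantity μ̃_n^{(s)} := inf over n-dimensional linear subspaces A of H̃^s_{Ω,0} ∩ L²₀(Ω) of sup_{u ∈ A, u≠0} (c_{N,s}/2)[u]²_{H^s_{Ω,0}} / ‖u‖²_{L²(Ω)} equals μ_n^{(s)}(Ω), the corresponding min-max value taken over n-dimensional subspaces of the larger space H^s_{Ω,0} ∩ L²₀(Ω). -/

import Mathlib

open MeasureTheory Filter Topology Bornology Set
open scoped ENNReal NNReal

noncomputable section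

namespace FracNeumann

abbrev Euc (N : ℕ) : Type := EuclideanSpace ℝ (Fin N)

/-- The kernel weight `|x - y| ^ (N + 2s)`. -/
def kern (N : ℕ) (s : ℝ) (x y : Euc N) : ℝ := ‖x - y‖ ^ ((N : ℝ) + 2 * s)

/-- The region `ℝ^{2N} \ (Ω^c × Ω^c)`, where `Ω^c := ℝ^N \ closure Ω`. -/
def reg (N : ℕ) (Ω : Set (Euc N)) : Set (Euc N × Euc N) :=
  {q | q.1 ∈ closure Ω ∨ q.2 ∈ closure Ω}

/-- The squared seminorm `[u]_{H^s_{Ω,0}}²`, as an extended real number. -/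
def semiSq (N : ℕ) (s : ℝ) (Ω : Set (Euc N)) (u : Euc N → ℝ) : ℝ≥0∞ :=
  ∫⁻ q in reg N Ω, ENNReal.ofReal ((u q.1 - u q.2) ^ 2 / kern N s q.1 q.2)

/-- `∫_Ω u²`, as an extended real number. -/
def l2sq (N : ℕ) (Ω : Set (Euc N)) (u : Euc N → ℝ) : ℝ≥0∞ :=
  ∫⁻ x in Ω, ENNReal.ofReal ((u x) ^ 2)

/-- Membership in `H^s_{Ω,0}`. -/
def memHs (N : ℕ) (s : ℝ) (Ω : Set (Euc N)) (u : Euc N → ℝ) : Prop :=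
  Measurable u ∧ l2sq N Ω u < ⊤ ∧ semiSq N s Ω u < ⊤

/-- The squared Gagliardo seminorm `[u]_{H^s(Ω)}²`. -/
def semiSqOn (N : ℕ) (s : ℝ) (Ω : Set (Euc N)) (u : Euc N → ℝ) : ℝ≥0∞ :=
  ∫⁻ q in Ω ×ˢ Ω, ENNReal.ofReal ((u q.1 - u q.2) ^ 2 / kern N s q.1 q.2)

/-- Membership in `H^s(Ω)` (for functions defined on all of `ℝ^N`). -/
def memHsOn (N : ℕ) (s : ℝ) (Ω : Set (Euc N)) (u : Euc N → ℝ) : Prop :=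
  Measurable u ∧ l2sq N Ω u < ⊤ ∧ semiSqOn N s Ω u < ⊤

/-- The normalizing constant `c_{N,s}` of the fractional Laplacian. -/
def cNs (N : ℕ) (s : ℝ) : ℝ :=
  (4 : ℝ) ^ s * s * Real.Gamma ((N : ℝ) / 2 + s) /
    (Real.pi ^ ((N : ℝ) / 2) * Real.Gamma (1 - s))

/-- The nonlocal Neumann derivative `𝒩_s u`. -/
def Nneu (N : ℕ) (s : ℝ) (Ω : Set (Euc N)) (u : Euc N → ℝ) (x : Euc N) : ℝ :=
  cNs N s * ∫ y in Ω, (u x - u y) / kern N s x y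

/-- Membership in `H̃^s_{Ω,0}`: members of `H^s_{Ω,0}` with `𝒩_s u = 0` a.e. in `Ω^c`. -/
def memHsTilde (N : ℕ) (s : ℝ) (Ω : Set (Euc N)) (u : Euc N → ℝ) : Prop :=
  memHs N s Ω u ∧ ∀ᵐ x ∂(volume.restrict (closure Ω)ᶜ), Nneu N s Ω u x = 0

/-- The first nontrivial Neumann eigenvalue `μ₁^{(s)}(Ω)`. -/
def mu1 (N : ℕ) (s : ℝ) (Ω : Set (Euc N)) : ℝ :=
  sInf {t : ℝ | ∃ u : Euc N → ℝ, memHs N s Ω u ∧ (∫ x in Ω, (u x) ^ 2) = 1 ∧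
    (∫ x in Ω, u x) = 0 ∧ t = cNs N s / 2 * (semiSq N s Ω u).toReal}

/-- The bilinear form (without the constant). -/
def bform (N : ℕ) (s : ℝ) (Ω : Set (Euc N)) (u v : Euc N → ℝ) : ℝ :=
  ∫ q in reg N Ω, (u q.1 - u q.2) * (v q.1 - v q.2) / kern N s q.1 q.2

/-- First nontrivial eigenfunction: weak solution associated to `μ₁^{(s)}(Ω)`. -/
def IsFirstEigen (N : ℕ) (s : ℝ) (Ω : Set (Euc N)) (u : Euc N → ℝ) : Prop :=
  memHs N s Ω u ∧ ¬ (u =ᵐ[volume.restrict Ω] 0) ∧ (∫ x in Ω, u x) = 0 ∧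
    ∀ v : Euc N → ℝ, memHs N s Ω v →
      cNs N s / 2 * bform N s Ω u v = mu1 N s Ω * ∫ x in Ω, u x * v x

/-- Reflection `σ_e(x) = x - 2(x·e)e` across the hyperplane `{x·e = 0}`. -/
def reflect (N : ℕ) (e x : Euc N) : Euc N := x - (2 * (inner ℝ x e : ℝ)) • e

/-- The polarization `P_e u` with respect to the hyperplane `{x·e = 0}`. -/
def polarize (N : ℕ) (e : Euc N) (u : Euc N → ℝ) (x : Euc N) : ℝ :=
  if 0 ≤ (inner ℝ x e : ℝ) then min (u x) (u (reflect N e x))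
  else max (u x) (u (reflect N e x))

/-- Foliated Schwarz symmetry with respect to `p`. -/
def FoliatedSchwarz (N : ℕ) (p : Euc N) (u : Euc N → ℝ) : Prop :=
  ∃ uh : ℝ → ℝ → ℝ, (∀ r : ℝ, AntitoneOn (uh r) (Icc 0 Real.pi)) ∧
    ∀ x : Euc N, x ≠ 0 → u x = uh ‖x‖ (Real.arccos ((inner ℝ x p : ℝ) / ‖x‖))

/-- Radial symmetry (pointwise). -/
def Radial (N : ℕ) (u : Euc N → ℝ) : Prop := ∃ f : ℝ → ℝ, ∀ x, u x = f ‖x‖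

/-- Radial symmetry (a.e.). -/
def RadialAE (N : ℕ) (u : Euc N → ℝ) : Prop :=
  ∃ f : ℝ → ℝ, ∀ᵐ x : Euc N ∂volume, u x = f ‖x‖

/-- The set `{x ∈ Ω : u x ≠ 0}` has exactly two connected components. -/
def TwoNodal (N : ℕ) (Ω : Set (Euc N)) (u : Euc N → ℝ) : Prop :=
  Nat.card (ConnectedComponents {x : Euc N // x ∈ Ω ∧ u x ≠ 0}) = 2

/-- Bounded Lipschitz domain: open, bounded, connected, and near every boundary point the set
is the region above the graph of a Lipschitz function in some direction `e`. -/
def IsLipschitzDomain (N : ℕ) (Ω : Set (Euc N)) : Prop :=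
  IsOpen Ω ∧ IsBounded Ω ∧ IsConnected Ω ∧
    ∀ x ∈ frontier Ω, ∃ e : Euc N, ‖e‖ = 1 ∧ ∃ r : ℝ, 0 < r ∧
      ∃ (L : NNReal) (f : Euc N → ℝ), LipschitzWith L f ∧
        ∀ y ∈ Metric.ball x r,
          (y ∈ Ω ↔ f (y - ((inner ℝ y e : ℝ)) • e) < (inner ℝ y e : ℝ))

/-- `g` is a weak gradient of `u` in `Ω`, square-integrable on `Ω`. -/
def IsWeakGradient (N : ℕ) (Ω : Set (Euc N)) (u : Euc N → ℝ) (g : Euc N → Euc N) : Prop :=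
  Measurable g ∧ (∫⁻ x in Ω, ENNReal.ofReal (‖g x‖ ^ 2)) < ⊤ ∧
    ∀ φ : Euc N → ℝ, ContDiff ℝ (⊤ : ℕ∞) φ → HasCompactSupport φ → tsupport φ ⊆ Ω →
      ∀ i : Fin N, (∫ x in Ω, u x * fderiv ℝ φ x (EuclideanSpace.single i 1)) =
        - ∫ x in Ω, g x i * φ x

/-- Membership in `H¹(Ω)`. -/
def memH1 (N : ℕ) (Ω : Set (Euc N)) (u : Euc N → ℝ) : Prop :=
  Measurable u ∧ l2sq N Ω u < ⊤ ∧ ∃ g, IsWeakGradient N Ω u g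

/-- `∫_Ω |∇u|²`, as an extended real number. -/
def gradSq (N : ℕ) (Ω : Set (Euc N)) (u : Euc N → ℝ) : ℝ≥0∞ :=
  ⨅ (g : Euc N → Euc N) (_ : IsWeakGradient N Ω u g), ∫⁻ x in Ω, ENNReal.ofReal (‖g x‖ ^ 2)

/-- Rayleigh quotient for the fractional Neumann problem. -/
def rayleighS (N : ℕ) (s : ℝ) (Ω : Set (Euc N)) (u : Euc N → ℝ) : ℝ≥0∞ :=
  ENNReal.ofReal (cNs N s / 2) * semiSq N s Ω u / l2sq N Ω u

/-- Rayleigh quotient for the local Neumann problem. -/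
def rayleigh1 (N : ℕ) (Ω : Set (Euc N)) (u : Euc N → ℝ) : ℝ≥0∞ :=
  gradSq N Ω u / l2sq N Ω u

/-- The min-max value `μ_n^{(s)}(Ω)` over `n`-dimensional subspaces of `H^s_{Ω,0} ∩ L²₀(Ω)`. -/
def muNs (N : ℕ) (s : ℝ) (Ω : Set (Euc N)) (n : ℕ) : ℝ≥0∞ :=
  ⨅ (A : Submodule ℝ (Euc N → ℝ)) (_ : Module.finrank ℝ A = n ∧
      (∀ u ∈ A, memHs N s Ω u ∧ (∫ x in Ω, u x) = 0) ∧
      (∀ u ∈ A, u =ᵐ[(volume : Measure (Euc N))] 0 → u = 0)),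
    ⨆ (u : Euc N → ℝ) (_ : u ∈ A ∧ u ≠ 0), rayleighS N s Ω u

/-- The min-max value over `n`-dimensional subspaces of `H̃^s_{Ω,0} ∩ L²₀(Ω)`. -/
def muNsTilde (N : ℕ) (s : ℝ) (Ω : Set (Euc N)) (n : ℕ) : ℝ≥0∞ :=
  ⨅ (A : Submodule ℝ (Euc N → ℝ)) (_ : Module.finrank ℝ A = n ∧
      (∀ u ∈ A, memHsTilde N s Ω u ∧ (∫ x in Ω, u x) = 0) ∧
      (∀ u ∈ A, u =ᵐ[(volume : Measure (Euc N))] 0 → u = 0)),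
    ⨆ (u : Euc N → ℝ) (_ : u ∈ A ∧ u ≠ 0), rayleighS N s Ω u

/-- The min-max value `μ_n^{(1)}(Ω)` over `n`-dimensional subspaces of `H¹(Ω) ∩ L²₀(Ω)`. -/
def muN1 (N : ℕ) (Ω : Set (Euc N)) (n : ℕ) : ℝ≥0∞ :=
  ⨅ (A : Submodule ℝ (Euc N → ℝ)) (_ : Module.finrank ℝ A = n ∧
      (∀ u ∈ A, memH1 N Ω u ∧ (∫ x in Ω, u x) = 0) ∧
      (∀ u ∈ A, u =ᵐ[volume.restrict Ω] 0 → u = 0)),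
    ⨆ (u : Euc N → ℝ) (_ : u ∈ A ∧ u ≠ 0), rayleigh1 N Ω u

/-- `μ_n^{(s)}(Ω)` including `μ₀^{(s)}(Ω) := 0`. -/
def muNsFull (N : ℕ) (s : ℝ) (Ω : Set (Euc N)) (n : ℕ) : ℝ≥0∞ :=
  if n = 0 then 0 else muNs N s Ω n

/-- `μ_n^{(1)}(Ω)` including `μ₀^{(1)}(Ω) := 0`. -/
def muN1Full (N : ℕ) (Ω : Set (Euc N)) (n : ℕ) : ℝ≥0∞ :=
  if n = 0 then 0 else muN1 N Ω n

/-- The squared `H^s_{Ω,0}`-seminorm of the `s`-minimal extension of `u`: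
the minimal value of `[v]²` over `v ∈ H^s_{Ω,0}` with `v = u` a.e. in `Ω`. -/
def minExtSemiSq (N : ℕ) (s : ℝ) (Ω : Set (Euc N)) (u : Euc N → ℝ) : ℝ≥0∞ :=
  ⨅ (v : Euc N → ℝ) (_ : memHs N s Ω v ∧ v =ᵐ[volume.restrict Ω] u), semiSq N s Ω v

/-- `ω_{N-1}`: volume of the unit ball of `ℝ^{N-1}`. -/
def omegaPrev (N : ℕ) : ℝ := (volume (Metric.ball (0 : Euc (N - 1)) 1)).toReal

/-- Membership in `L²₀(Ω)`. -/
def memL20 (N : ℕ) (Ω : Set (Euc N)) (u : Euc N → ℝ) : Prop :=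
  Measurable u ∧ l2sq N Ω u < ⊤ ∧ (∫ x in Ω, u x) = 0

/-- The functional `F_s` (value `+∞` outside `H^s(Ω)`). -/
def Fs (N : ℕ) (s : ℝ) (Ω : Set (Euc N)) (u : Euc N → ℝ) : ℝ≥0∞ :=
  ENNReal.ofReal (1 - s) * minExtSemiSq N s Ω u

/-- The functional `F₁` (value `+∞` outside `H¹(Ω)`). -/
def F1 (N : ℕ) (Ω : Set (Euc N)) (u : Euc N → ℝ) : ℝ≥0∞ :=
  ENNReal.ofReal (omegaPrev N / (2 * N)) * gradSq N Ω u

end FracNeumann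
namespace FracNeumann

theorem graph_null (N : ℕ) (e : Euc N) (he : ‖e‖ = 1) (L : NNReal) (f : Euc N → ℝ)
    (hf : LipschitzWith L f) :
    volume {y : Euc N | (inner ℝ y e : ℝ) - f (y - (inner ℝ y e : ℝ) • e) = 0} = 0 := by
  set g : Euc N → ℝ := fun y => (inner ℝ y e : ℝ) - f (y - (inner ℝ y e : ℝ) • e) with hg
  have hgc : Continuous g := by
    have := hf.continuous
    fun_prop
  have hee : (inner ℝ e e : ℝ) = 1 := by
    rw [real_inner_self_eq_norm_sq, he]; norm_num
  have htr : ∀ (y : Euc N) (t : ℝ), g (y + t • e) = g y + t := by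
    intro y t
    simp only [hg, inner_add_left, real_inner_smul_left, hee, mul_one]
    have : y + t • e - ((inner ℝ y e : ℝ) + t) • e = y - (inner ℝ y e : ℝ) • e := by
      rw [add_smul]; abel
    rw [this]; ring
  have hmeas : ∀ t : ℝ, volume {y : Euc N | g y = t} = volume {y : Euc N | g y = 0} := by
    intro t
    have : {y : Euc N | g y = t} = (fun y => y + (-t) • e) ⁻¹' {y : Euc N | g y = 0} := by
      ext y
      simp only [mem_ofPred_eq, mem_preimage, htr]
      constructor <;> intro h <;> linarith
    rw [this, measure_preimage_add_right]
  have hc := Measure.countable_meas_level_set_pos (μ := (volume : Measure (Euc N)))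
    hgc.measurable
  by_contra hne
  have : {t : ℝ | 0 < volume {a : Euc N | g a = t}} = univ := by
    ext t
    simp only [mem_ofPred_eq, mem_univ, iff_true, hmeas]
    exact pos_iff_ne_zero.mpr hne
  rw [this] at hc
  exact Cardinal.not_countable_real hc

theorem frontier_null (N : ℕ) (Ω : Set (Euc N)) (hΩ : IsLipschitzDomain N Ω) :
    volume (frontier Ω) = 0 := by
  obtain ⟨ho, -, -, hl⟩ := hΩ
  refine measure_null_of_locally_null _ fun x hx => ?_
  obtain ⟨e, he, r, hr, L, f, hf, hy⟩ := hl x hx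
  have hfc := hf.continuous
  refine ⟨Metric.ball x r ∩ frontier Ω, ?_, ?_⟩
  · rw [inter_comm]
    exact inter_mem_nhdsWithin _ (Metric.ball_mem_nhds x hr)
  refine measure_mono_null ?_ (graph_null N e he L f hf)
  rintro y ⟨hyb, hyf⟩
  have hyn : y ∉ Ω := by
    rw [ho.frontier_eq] at hyf; exact hyf.2
  have h1 : ¬ f (y - (inner ℝ y e : ℝ) • e) < inner ℝ y e := fun h => hyn ((hy y hyb).2 h)
  rcases (not_lt.1 h1).lt_or_eq with h | h
  · exfalso
    have hop : IsOpen (Metric.ball x r ∩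
        {z : Euc N | (inner ℝ z e : ℝ) < f (z - (inner ℝ z e : ℝ) • e)}) :=
      Metric.isOpen_ball.inter (isOpen_lt (by fun_prop) (by fun_prop))
    obtain ⟨z, ⟨hz1, hz2⟩, hz3⟩ := mem_closure_iff.1 hyf.1 _ hop ⟨hyb, h⟩
    exact lt_asymm ((hy z hz1).1 hz3) hz2
  · simp only [mem_ofPred_eq]; rw [← h]; ring

theorem ae_closure (N : ℕ) (Ω : Set (Euc N)) (hΩ : IsLipschitzDomain N Ω) :
    (volume : Measure (Euc N)).restrict (closure Ω) = volume.restrict Ω := by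
  refine (Measure.restrict_congr_set ?_).symm
  refine (ae_eq_set).2 ⟨?_, ?_⟩
  · rw [sdiff_eq_empty.2 subset_closure]; simp
  · have := frontier_null N Ω hΩ
    rwa [hΩ.1.frontier_eq] at this

theorem cNs_pos (N : ℕ) (s : ℝ) (hs : s ∈ Set.Ioo (0 : ℝ) 1) : 0 < cNs N s := by
  unfold cNs
  have h1 : 0 < Real.Gamma ((N : ℝ) / 2 + s) :=
    Real.Gamma_pos_of_pos (by have := hs.1; positivity)
  have h2 : 0 < Real.Gamma (1 - s) := Real.Gamma_pos_of_pos (by linarith [hs.2])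
  have := hs.1
  have := Real.pi_pos
  positivity

theorem kern_meas (N : ℕ) (s : ℝ) : Measurable fun q : Euc N × Euc N => kern N s q.1 q.2 := by
  unfold kern
  exact ((measurable_fst.sub measurable_snd).norm).pow_const _

theorem kern_meas' (N : ℕ) (s : ℝ) (x : Euc N) : Measurable fun y : Euc N => kern N s x y :=
  by
  unfold kern
  exact ((measurable_const.sub measurable_id).norm).pow_const _

theorem kern_nonneg (N : ℕ) (s : ℝ) (x y : Euc N) : 0 ≤ kern N s x y := by
  unfold kern; positivity

theorem kern_symm (N : ℕ) (s : ℝ) (x y : Euc N) : kern N s x y = kern N s y x := by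
  unfold kern; rw [norm_sub_rev]

theorem kern_pos (N : ℕ) (s : ℝ) (x y : Euc N) (h : x ≠ y) : 0 < kern N s x y := by
  unfold kern
  exact Real.rpow_pos_of_pos (norm_pos_iff.2 (sub_ne_zero.2 h)) _

theorem integrand_meas (N : ℕ) (s : ℝ) (u : Euc N → ℝ) (hu : Measurable u) :
    Measurable fun q : Euc N × Euc N =>
      ENNReal.ofReal ((u q.1 - u q.2) ^ 2 / kern N s q.1 q.2) := by
  have := kern_meas N s
  fun_prop

theorem kern_inv_bdd (N : ℕ) (s : ℝ) (hs : s ∈ Set.Ioo (0 : ℝ) 1) (Ω : Set (Euc N))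
    (x : Euc N) (hx : x ∉ closure Ω) : ∃ c : ℝ, ∀ y ∈ Ω, ‖(kern N s x y)⁻¹‖ ≤ c := by
  obtain ⟨d, hd, hb⟩ := Metric.isOpen_iff.1 isClosed_closure.isOpen_compl x hx
  refine ⟨(d ^ ((N : ℝ) + 2 * s))⁻¹, fun y hy => ?_⟩
  have hdy : d ≤ ‖x - y‖ := by
    by_contra h
    push Not at h
    have : y ∈ Metric.ball x d := by
      rw [Metric.mem_ball, dist_comm, dist_eq_norm]; exact h
    exact hb this (subset_closure hy)
  rw [Real.norm_of_nonneg (inv_nonneg.2 (kern_nonneg N s x y))]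
  have hp : 0 < d ^ ((N : ℝ) + 2 * s) := Real.rpow_pos_of_pos hd _
  refine inv_anti₀ hp ?_
  unfold kern
  exact Real.rpow_le_rpow hd.le hdy (by have := hs.1; positivity)

/-- multiplication by the kernel preserves integrability on `Ω`. -/
theorem int_mul (N : ℕ) (s : ℝ) (hs : s ∈ Set.Ioo (0 : ℝ) 1) (Ω : Set (Euc N))
    (ho : MeasurableSet Ω) (x : Euc N) (hx : x ∉ closure Ω) (g : Euc N → ℝ)
    (hg : Integrable g (volume.restrict Ω)) :
    Integrable (fun y => g y / kern N s x y) (volume.restrict Ω) := by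
  obtain ⟨c, hc⟩ := kern_inv_bdd N s hs Ω x hx
  simp only [div_eq_mul_inv]
  refine hg.mul_bdd (c := c) (kern_meas' N s x).inv.aestronglyMeasurable ?_
  filter_upwards [ae_restrict_mem ho] with y hy using hc y hy

theorem sq_int (N : ℕ) (Ω : Set (Euc N)) (u : Euc N → ℝ)
    (hu : Measurable u) (h2 : l2sq N Ω u < ⊤) :
    Integrable (fun y => u y ^ 2) (volume.restrict Ω) := by
  refine ⟨(hu.pow_const 2).aestronglyMeasurable, ?_⟩
  rw [hasFiniteIntegral_iff_ofReal (Eventually.of_forall fun y => sq_nonneg _)]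
  exact h2

theorem u_int (N : ℕ) (Ω : Set (Euc N)) (hb : IsBounded Ω) (u : Euc N → ℝ)
    (hu : Measurable u) (h2 : l2sq N Ω u < ⊤) :
    Integrable u (volume.restrict Ω) := by
  have : IsFiniteMeasure ((volume : Measure (Euc N)).restrict Ω) :=
    ⟨by rw [Measure.restrict_apply_univ]; exact hb.measure_lt_top⟩
  have := (memLp_two_iff_integrable_sq (μ := volume.restrict Ω)
    hu.aestronglyMeasurable).2 (sq_int N Ω u hu h2)
  exact this.integrable (by norm_num)

/-- total kernel weight -/
def wt (N : ℕ) (s : ℝ) (Ω : Set (Euc N)) (x : Euc N) : ℝ := ∫ y in Ω, 1 / kern N s x y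

theorem one_int (N : ℕ) (Ω : Set (Euc N)) (hb : IsBounded Ω) (c : ℝ) :
    Integrable (fun _ : Euc N => c) (volume.restrict Ω) := by
  have : IsFiniteMeasure ((volume : Measure (Euc N)).restrict Ω) :=
    ⟨by rw [Measure.restrict_apply_univ]; exact hb.measure_lt_top⟩
  exact integrable_const c

theorem wt_pos (N : ℕ) (s : ℝ) (hs : s ∈ Set.Ioo (0 : ℝ) 1) (Ω : Set (Euc N))
    (ho : IsOpen Ω) (hb : IsBounded Ω) (hne : Ω.Nonempty)
    (x : Euc N) (hx : x ∉ closure Ω) : 0 < wt N s Ω x := by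
  unfold wt
  have hi := int_mul N s hs Ω ho.measurableSet x hx _ (one_int N Ω hb 1)
  rw [setIntegral_pos_iff_support_of_nonneg_ae
    (Eventually.of_forall fun y => div_nonneg zero_le_one (kern_nonneg N s x y)) hi]
  have : (Function.support fun y => 1 / kern N s x y) ∩ Ω = Ω := by
    refine inter_eq_right.2 fun y hy => ?_
    have : x ≠ y := fun h => hx (h ▸ subset_closure hy)
    exact (one_div_pos.2 (kern_pos N s x y this)).ne'
  rw [this]
  exact ho.measure_pos _ hne

open Classical in
/-- the minimal extension -/
def ext (N : ℕ) (s : ℝ) (Ω : Set (Euc N)) (u : Euc N → ℝ) (x : Euc N) : ℝ :=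
  if x ∈ closure Ω then u x else (∫ y in Ω, u y / kern N s x y) / wt N s Ω x

theorem ext_in (N : ℕ) (s : ℝ) (Ω : Set (Euc N)) (u : Euc N → ℝ) (x : Euc N)
    (hx : x ∈ closure Ω) : ext N s Ω u x = u x := by
  unfold ext; rw [if_pos hx]

theorem ext_out (N : ℕ) (s : ℝ) (Ω : Set (Euc N)) (u : Euc N → ℝ) (x : Euc N)
    (hx : x ∉ closure Ω) :
    ext N s Ω u x = (∫ y in Ω, u y / kern N s x y) / wt N s Ω x := by
  unfold ext; rw [if_neg hx]

theorem ext_meas (N : ℕ) (s : ℝ) (Ω : Set (Euc N)) (u : Euc N → ℝ) (hu : Measurable u) :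
    Measurable (ext N s Ω u) := by
  classical
  have hk := kern_meas N s
  have h1 : Measurable fun x => ∫ y in Ω, u y / kern N s x y := by
    refine (StronglyMeasurable.integral_prod_right'
      (f := fun q : Euc N × Euc N => u q.2 / kern N s q.1 q.2) ?_).measurable
    exact ((hu.comp measurable_snd).div hk).stronglyMeasurable
  have h2 : Measurable fun x => wt N s Ω x := by
    refine (StronglyMeasurable.integral_prod_right'
      (f := fun q : Euc N × Euc N => 1 / kern N s q.1 q.2) ?_).measurable
    exact (measurable_const.div hk).stronglyMeasurable
  unfold ext
  exact Measurable.ite isClosed_closure.measurableSet hu (h1.div h2)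

/-- orthogonality: the Neumann derivative of the extension vanishes. -/
theorem ext_orth (N : ℕ) (s : ℝ) (hs : s ∈ Set.Ioo (0 : ℝ) 1) (Ω : Set (Euc N))
    (ho : IsOpen Ω) (hb : IsBounded Ω) (hne : Ω.Nonempty) (u : Euc N → ℝ)
    (hu : Measurable u) (h2 : l2sq N Ω u < ⊤) (x : Euc N) (hx : x ∉ closure Ω) :
    ∫ y in Ω, (ext N s Ω u x - u y) / kern N s x y = 0 := by
  have hw := wt_pos N s hs Ω ho hb hne x hx
  have hi1 := int_mul N s hs Ω ho.measurableSet x hx _ (one_int N Ω hb 1)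
  have hi2 := int_mul N s hs Ω ho.measurableSet x hx _ (u_int N Ω hb u hu h2)
  have : ∀ y, (ext N s Ω u x - u y) / kern N s x y
      = ext N s Ω u x * (1 / kern N s x y) - u y / kern N s x y := by intro y; ring
  simp only [this]
  rw [integral_sub (hi1.const_mul _) hi2, integral_const_mul, ext_out N s Ω u x hx]
  change _ / _ * wt N s Ω x - _ = 0
  field_simp
  ring

theorem ext_min (N : ℕ) (s : ℝ) (hs : s ∈ Set.Ioo (0 : ℝ) 1) (Ω : Set (Euc N))
    (ho : IsOpen Ω) (hb : IsBounded Ω) (hne : Ω.Nonempty) (u : Euc N → ℝ)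
    (hu : Measurable u) (h2 : l2sq N Ω u < ⊤) (x : Euc N) (hx : x ∉ closure Ω) (t : ℝ) :
    ∫⁻ y in Ω, ENNReal.ofReal ((ext N s Ω u x - u y) ^ 2 / kern N s x y)
      ≤ ∫⁻ y in Ω, ENNReal.ofReal ((t - u y) ^ 2 / kern N s x y) := by
  have hui := u_int N Ω hb u hu h2
  have hI : ∀ c : ℝ, Integrable (fun y => (c - u y) ^ 2 / kern N s x y)
      (volume.restrict Ω) := by
    intro c
    refine int_mul N s hs Ω ho.measurableSet x hx (fun y => (c - u y) ^ 2) ?_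
    have : (fun y => (c - u y) ^ 2) = fun y => c ^ 2 - 2 * c * u y + u y ^ 2 := by
      funext y; ring
    rw [this]
    exact ((one_int N Ω hb _).sub (hui.const_mul _)).add (sq_int N Ω u hu h2)
  have hnn : ∀ c : ℝ, 0 ≤ᵐ[volume.restrict Ω] fun y => (c - u y) ^ 2 / kern N s x y :=
    fun c => Eventually.of_forall fun y => div_nonneg (sq_nonneg _) (kern_nonneg N s x y)
  rw [← ofReal_integral_eq_lintegral_ofReal (hI _) (hnn _),
    ← ofReal_integral_eq_lintegral_ofReal (hI _) (hnn _)]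
  refine ENNReal.ofReal_le_ofReal ?_
  have horth := ext_orth N s hs Ω ho hb hne u hu h2 x hx
  set m := ext N s Ω u x with hm
  have hi1 := int_mul N s hs Ω ho.measurableSet x hx _ (one_int N Ω hb 1)
  have hi3 := int_mul N s hs Ω ho.measurableSet x hx (fun y => m - u y)
    ((one_int N Ω hb m).sub hui)
  have hw := wt_pos N s hs Ω ho hb hne x hx
  have : ∀ y, (t - u y) ^ 2 / kern N s x y = (m - u y) ^ 2 / kern N s x y +
      (2 * (t - m) * ((m - u y) / kern N s x y) + (t - m) ^ 2 * (1 / kern N s x y)) := by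
    intro y; ring
  simp only [this]
  have hsum : Integrable (fun y => 2 * (t - m) * ((m - u y) / kern N s x y) +
      (t - m) ^ 2 * (1 / kern N s x y)) (volume.restrict Ω) :=
    (hi3.const_mul _).add (hi1.const_mul _)
  rw [integral_add (hI m) hsum,
    integral_add (hi3.const_mul _) (hi1.const_mul _), integral_const_mul, integral_const_mul,
    horth]
  change _ ≤ _ + (_ + _ * wt N s Ω x)
  have := mul_nonneg (sq_nonneg (t - m)) hw.le
  linarith

theorem semiSq_split (N : ℕ) (s : ℝ) (Ω : Set (Euc N)) (hΩ : IsLipschitzDomain N Ω)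
    (u : Euc N → ℝ) (hu : Measurable u) :
    semiSq N s Ω u =
      (∫⁻ q in closure Ω ×ˢ closure Ω,
          ENNReal.ofReal ((u q.1 - u q.2) ^ 2 / kern N s q.1 q.2)) +
      (∫⁻ x in (closure Ω)ᶜ, ∫⁻ y in Ω, ENNReal.ofReal ((u x - u y) ^ 2 / kern N s x y)) +
      (∫⁻ x in (closure Ω)ᶜ, ∫⁻ y in Ω, ENNReal.ofReal ((u x - u y) ^ 2 / kern N s x y)) := by
  have hC : MeasurableSet (closure Ω) := isClosed_closure.measurableSet
  have hF := integrand_meas N s u hu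
  have hreg : reg N Ω = (closure Ω ×ˢ closure Ω ∪ (closure Ω)ᶜ ×ˢ closure Ω) ∪
      closure Ω ×ˢ (closure Ω)ᶜ := by
    ext q
    simp only [reg, mem_ofPred_eq, mem_union, mem_prod, mem_compl_iff]
    tauto
  unfold semiSq
  rw [hreg, lintegral_union (hC.prod hC.compl), lintegral_union (hC.compl.prod hC)]
  · congr 1
    · congr 1
      rw [Measure.volume_eq_prod, setLIntegral_prod _ hF.aemeasurable, ae_closure N Ω hΩ]
    · rw [Measure.volume_eq_prod, setLIntegral_prod_symm _ hF.aemeasurable, ae_closure N Ω hΩ]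
      refine lintegral_congr fun x => lintegral_congr fun y => ?_
      rw [kern_symm]
      congr 2
      ring
  · rw [Set.disjoint_left]; rintro q ⟨h1, h2⟩ ⟨h3, h4⟩; exact h3 h1
  · rw [Set.disjoint_left]; rintro q (⟨h1, h2⟩ | ⟨h1, h2⟩) ⟨h3, h4⟩ <;> exact h4 h2

theorem ext_semiSq_le (N : ℕ) (s : ℝ) (hs : s ∈ Set.Ioo (0 : ℝ) 1) (Ω : Set (Euc N))
    (hΩ : IsLipschitzDomain N Ω) (u : Euc N → ℝ) (hu : Measurable u) (h2 : l2sq N Ω u < ⊤) :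
    semiSq N s Ω (ext N s Ω u) ≤ semiSq N s Ω u := by
  have hC : MeasurableSet (closure Ω) := isClosed_closure.measurableSet
  rw [semiSq_split N s Ω hΩ u hu, semiSq_split N s Ω hΩ _ (ext_meas N s Ω u hu)]
  have h1 : (∫⁻ q in closure Ω ×ˢ closure Ω,
        ENNReal.ofReal ((ext N s Ω u q.1 - ext N s Ω u q.2) ^ 2 / kern N s q.1 q.2)) =
      ∫⁻ q in closure Ω ×ˢ closure Ω,
        ENNReal.ofReal ((u q.1 - u q.2) ^ 2 / kern N s q.1 q.2) := by
    refine setLIntegral_congr_fun (hC.prod hC) fun q hq => ?_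
    simp only [ext_in N s Ω u _ hq.1, ext_in N s Ω u _ hq.2]
  have h3 : (∫⁻ x in (closure Ω)ᶜ, ∫⁻ y in Ω,
        ENNReal.ofReal ((ext N s Ω u x - ext N s Ω u y) ^ 2 / kern N s x y)) ≤
      ∫⁻ x in (closure Ω)ᶜ, ∫⁻ y in Ω,
        ENNReal.ofReal ((u x - u y) ^ 2 / kern N s x y) := by
    refine setLIntegral_mono' hC.compl fun x hx => ?_
    refine le_trans (le_of_eq ?_)
      (ext_min N s hs Ω hΩ.1 hΩ.2.1 hΩ.2.2.1.1 u hu h2 x hx (u x))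
    refine setLIntegral_congr_fun hΩ.1.measurableSet fun y hy => ?_
    simp only [ext_in N s Ω u _ (subset_closure hy)]
  rw [h1]
  gcongr

theorem ext_l2sq (N : ℕ) (s : ℝ) (Ω : Set (Euc N)) (ho : IsOpen Ω) (u : Euc N → ℝ) :
    l2sq N Ω (ext N s Ω u) = l2sq N Ω u := by
  unfold l2sq
  refine setLIntegral_congr_fun ho.measurableSet fun y hy => ?_
  simp only [ext_in N s Ω u _ (subset_closure hy)]

theorem ext_integral (N : ℕ) (s : ℝ) (Ω : Set (Euc N)) (ho : IsOpen Ω) (u : Euc N → ℝ) :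
    ∫ x in Ω, ext N s Ω u x = ∫ x in Ω, u x :=
  setIntegral_congr_fun ho.measurableSet fun _ hy => ext_in N s Ω u _ (subset_closure hy)

theorem ext_mem (N : ℕ) (s : ℝ) (hs : s ∈ Set.Ioo (0 : ℝ) 1) (Ω : Set (Euc N))
    (hΩ : IsLipschitzDomain N Ω) (u : Euc N → ℝ) (hu : memHs N s Ω u) :
    memHsTilde N s Ω (ext N s Ω u) := by
  refine ⟨⟨ext_meas N s Ω u hu.1, ?_, ?_⟩, ?_⟩
  · rw [ext_l2sq N s Ω hΩ.1]; exact hu.2.1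
  · exact (ext_semiSq_le N s hs Ω hΩ u hu.1 hu.2.1).trans_lt hu.2.2
  · filter_upwards [ae_restrict_mem isClosed_closure.measurableSet.compl] with x hx
    unfold Nneu
    rw [setIntegral_congr_fun hΩ.1.measurableSet
      (g := fun y => (ext N s Ω u x - u y) / kern N s x y),
      ext_orth N s hs Ω hΩ.1 hΩ.2.1 hΩ.2.2.1.1 u hu.1 hu.2.1 x hx, mul_zero]
    intro y hy
    simp only [ext_in N s Ω u y (subset_closure hy)]

/-- if `u` vanishes on `Ω` and has zero seminorm then it vanishes. -/
theorem zero_of_semi (N : ℕ) (s : ℝ) (Ω : Set (Euc N))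
    (hΩ : IsLipschitzDomain N Ω) (u : Euc N → ℝ) (hu : Measurable u)
    (h0 : u =ᵐ[volume.restrict Ω] 0) (hs0 : semiSq N s Ω u = 0) :
    u =ᵐ[volume] 0 := by
  have hC : MeasurableSet (closure Ω) := isClosed_closure.measurableSet
  rw [semiSq_split N s Ω hΩ u hu] at hs0
  have h1 := (add_eq_zero.1 hs0).2
  have hF := integrand_meas N s u hu
  rw [lintegral_eq_zero_iff (Measurable.lintegral_prod_right' hF)] at h1
  have h2 : ∀ᵐ x ∂volume.restrict (closure Ω)ᶜ, u x = 0 := by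
    filter_upwards [h1, ae_restrict_mem hC.compl] with x hx hxC
    have hx' : ∫⁻ y in Ω, ENNReal.ofReal ((u x - u y) ^ 2 / kern N s x y) = 0 := hx
    have hFx : Measurable fun y => ENNReal.ofReal ((u x - u y) ^ 2 / kern N s x y) := by
      have := kern_meas' N s x
      fun_prop
    rw [lintegral_eq_zero_iff hFx] at hx'
    have : NeBot (ae ((volume : Measure (Euc N)).restrict Ω)) := by
      rw [ae_neBot, Ne, Measure.restrict_eq_zero]
      exact (hΩ.1.measure_pos _ hΩ.2.2.1.1).ne'
    obtain ⟨y, hy1, hy2, hy3⟩ :=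
      (hx'.and (h0.and (ae_restrict_mem hΩ.1.measurableSet))).exists
    have hne : x ≠ y := fun h => hxC (h ▸ subset_closure hy3)
    have hk := kern_pos N s x y hne
    simp only [Pi.zero_apply, ENNReal.ofReal_eq_zero, Function.comp_apply, id] at hy1 hy2
    rw [hy2, sub_zero] at hy1
    have h5 : u x ^ 2 ≤ 0 := by
      by_contra h
      push Not at h
      exact absurd hy1 (not_le.2 (div_pos h hk))
    exact pow_eq_zero_iff (two_ne_zero) |>.1 (le_antisymm h5 (sq_nonneg _))
  rw [← ae_closure N Ω hΩ] at h0
  exact ae_of_ae_restrict_of_ae_restrict_compl (closure Ω) h0 h2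

/-- The minimal extension as a linear map on a space of `H^s` functions. -/
def extLin (N : ℕ) (s : ℝ) (hs : s ∈ Set.Ioo (0 : ℝ) 1) (Ω : Set (Euc N))
    (hΩ : IsLipschitzDomain N Ω) (A : Submodule ℝ (Euc N → ℝ))
    (hA : ∀ u ∈ A, memHs N s Ω u) : A →ₗ[ℝ] (Euc N → ℝ) where
  toFun u := ext N s Ω u
  map_add' u v := by
    funext x
    by_cases hx : x ∈ closure Ω
    · simp [ext_in N s Ω _ x hx]
    · have hu := hA u u.2
      have hv := hA v v.2
      have h1 := int_mul N s hs Ω hΩ.1.measurableSet x hx _ (u_int N Ω hΩ.2.1 _ hu.1 hu.2.1)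
      have h2 := int_mul N s hs Ω hΩ.1.measurableSet x hx _ (u_int N Ω hΩ.2.1 _ hv.1 hv.2.1)
      simp only [Pi.add_apply, ext_out N s Ω _ x hx, Submodule.coe_add, add_div]
      rw [integral_add h1 h2, add_div]
  map_smul' c u := by
    funext x
    by_cases hx : x ∈ closure Ω
    · simp [ext_in N s Ω _ x hx]
    · simp only [ext_out N s Ω _ x hx, Submodule.coe_smul, Pi.smul_apply, smul_eq_mul,
        mul_div_assoc, integral_const_mul, RingHom.id_apply]

/-- Proposition 2.7: the min-max values over `n`-dimensional subspaces of
`H̃^s_{Ω,0} ∩ L²₀(Ω)` coincide with those over `n`-dimensional subspaces of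
`H^s_{Ω,0} ∩ L²₀(Ω)`. -/
theorem statement4 (N : ℕ) (hN : 2 ≤ N) (s : ℝ) (hs : s ∈ Set.Ioo (0 : ℝ) 1)
    (Ω : Set (Euc N)) (hΩ : IsLipschitzDomain N Ω) (n : ℕ) (hn : 1 ≤ n) :
    muNsTilde N s Ω n = muNs N s Ω n := by
  apply le_antisymm
  · refine le_iInf₂ fun A hA => ?_
    obtain ⟨hdim, hmem, hz⟩ := hA
    by_cases hdeg : ∃ u ∈ A, u ≠ 0 ∧ u =ᵐ[volume.restrict Ω] 0
    · obtain ⟨u, huA, hu0, huΩ⟩ := hdeg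
      have htop : rayleighS N s Ω u = ⊤ := by
        have hl : l2sq N Ω u = 0 := by
          unfold l2sq
          rw [lintegral_congr_ae (g := fun _ => 0), lintegral_zero]
          filter_upwards [huΩ] with x hx
          simp [hx]
        have hsne : semiSq N s Ω u ≠ 0 := fun h =>
          hu0 (hz u huA (zero_of_semi N s Ω hΩ u (hmem u huA).1.1 huΩ h))
        unfold rayleighS
        rw [hl]
        refine ENNReal.div_zero (mul_ne_zero ?_ hsne)
        have := cNs_pos N s hs
        simp only [ne_eq, ENNReal.ofReal_eq_zero, not_le]
        linarith
      have : (⊤ : ℝ≥0∞) ≤ ⨆ (u : Euc N → ℝ) (_ : u ∈ A ∧ u ≠ 0), rayleighS N s Ω u :=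
        htop ▸ le_iSup₂_of_le u ⟨huA, hu0⟩ le_rfl
      exact le_top.trans this
    · push Not at hdeg
      set T := extLin N s hs Ω hΩ A (fun u hu => (hmem u hu).1) with hT
      have key : ∀ u : A, ext N s Ω u =ᵐ[volume] 0 → u = 0 := by
        intro u hu
        by_contra hne
        have hne' : (u : Euc N → ℝ) ≠ 0 := fun h => hne (Subtype.ext h)
        refine hdeg u u.2 hne' ?_
        filter_upwards [ae_restrict_of_ae hu, ae_restrict_mem hΩ.1.measurableSet] with x hx hxΩ
        rw [← hx, ext_in N s Ω _ x (subset_closure hxΩ)]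
      have hinj : Function.Injective T := by
        rw [← LinearMap.ker_eq_bot, LinearMap.ker_eq_bot']
        intro u hu
        have hu' : ext N s Ω u = 0 := hu
        exact key u (by rw [hu'])
      refine iInf₂_le_of_le (LinearMap.range T) ⟨?_, ?_, ?_⟩ ?_
      · rw [LinearMap.finrank_range_of_inj hinj, hdim]
      · rintro _ ⟨u, rfl⟩
        refine ⟨ext_mem N s hs Ω hΩ u (hmem u u.2).1, ?_⟩
        exact (ext_integral N s Ω hΩ.1 u).trans (hmem u u.2).2
      · rintro _ ⟨u, rfl⟩ hu
        rw [key u hu, map_zero]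
      · refine iSup₂_le ?_
        rintro _ ⟨⟨u, rfl⟩, hne⟩
        have hne' : (u : Euc N → ℝ) ≠ 0 := by
          intro h
          apply hne
          rw [show u = 0 from Subtype.ext h, map_zero]
        refine le_iSup₂_of_le (u : Euc N → ℝ) ⟨u.2, hne'⟩ ?_
        change rayleighS N s Ω (ext N s Ω u) ≤ _
        unfold rayleighS
        rw [ext_l2sq N s Ω hΩ.1]
        have := ext_semiSq_le N s hs Ω hΩ u (hmem u u.2).1.1 (hmem u u.2).1.2.1
        gcongr
  · refine le_iInf₂ fun A hA => ?_
    exact iInf₂_le A ⟨hA.1, fun u hu => ⟨(hA.2.1 u hu).1.1, (hA.2.1 u hu).2⟩, hA.2.2⟩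

end FracNeumann
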